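/- (Theorem 3, rank criterion, per-input form.) Let M : Matrix (Fin c) (Fin d) ℝ be a row-stochastic matrix of full row rank, i.e. M.rank = c. Then for all positive probability vectors p and g on Fin c, the composed cross-entropy satisfies CE(g) ≥ CE(p), where CE(g) = −Σ_{o} (Σ_{j} M j o · p j) · log (Σ_{j} M j o · g j); moreover CE(g) = CE(p) if and only if g = p. In particular, the ground-truth class posterior p is the unique minimiser of the composed cross-entropy risk over positive probability vectors. -/

import Mathlib

/-!
Write `a = p ᵥ* M` and `b = g ᵥ* M` for the two output distributions. The inequality is Gibbs'
inequality for `a` and `b`: each term satisfies `a log b - a log a ≤ b - a`, strictly unless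
`a = b` (`mul_log_sub_le`, `eq_of_mul_log_sub_eq`), and the right-hand sides sum to zero because
`M` is row-stochastic. Positivity of `p` and `g` makes `a` and `b` vanish at the same outputs
(where the column of `M` is zero), so the junk value `log 0 = 0` is harmless. Equality of the risks
thus forces `p ᵥ* M = g ᵥ* M`, and full row rank makes `v ↦ v ᵥ* M` injective.
-/

lemma mul_log_sub_le {a b : ℝ} (ha : 0 ≤ a) (hb : 0 ≤ b) (hab : b = 0 → a = 0) :
    a * Real.log b - a * Real.log a ≤ b - a := by
  rcases ha.eq_or_lt with rfl | ha
  · simpa using hb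
  have hb' : 0 < b := hb.lt_of_ne fun h => ha.ne' (hab h.symm)
  have h := mul_le_mul_of_nonneg_left (Real.log_le_sub_one_of_pos (div_pos hb' ha)) ha.le
  rw [Real.log_div hb'.ne' ha.ne', mul_sub, mul_sub, mul_div_cancel₀ _ ha.ne'] at h
  linarith

lemma eq_of_mul_log_sub_eq {a b : ℝ} (ha : 0 ≤ a) (hb : 0 ≤ b) (hab : b = 0 → a = 0)
    (h : a * Real.log b - a * Real.log a = b - a) : a = b := by
  rcases ha.eq_or_lt with rfl | ha
  · simpa using h
  have hb' : 0 < b := hb.lt_of_ne fun h => ha.ne' (hab h.symm)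
  by_contra hne
  have hne' : b / a ≠ 1 := fun h1 => hne ((div_eq_one_iff_eq ha.ne').1 h1).symm
  have h2 := mul_lt_mul_of_pos_left (Real.log_lt_sub_one_of_pos (div_pos hb' ha) hne') ha
  rw [Real.log_div hb'.ne' ha.ne', mul_sub, mul_sub, mul_div_cancel₀ _ ha.ne'] at h2
  linarith

lemma vecMul_injective_of_rank {c d : ℕ} (M : Matrix (Fin c) (Fin d) ℝ) (h : M.rank = c) :
    Function.Injective M.vecMul := by
  rw [Matrix.vecMul_injective_iff, linearIndependent_iff_card_eq_finrank_span]
  rw [Matrix.rank_eq_finrank_span_row] at h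
  simpa [Set.finrank] using h.symm

/-- Theorem 3 (rank criterion, per-input form): for a row-stochastic matrix `M`
of full row rank, the composed cross-entropy `CE(g)` is minimised uniquely at
the true posterior `p`. -/
theorem stmt_6 (c d : ℕ) (hc : 1 ≤ c) (hd : 1 ≤ d)
    (M : Matrix (Fin c) (Fin d) ℝ)
    (hM_nonneg : ∀ j o, 0 ≤ M j o)
    (hM_row : ∀ j, ∑ o, M j o = 1)
    (hM_rank : M.rank = c)
    (p g : Fin c → ℝ)
    (hp_pos : ∀ j, 0 < p j) (hp_sum : ∑ j, p j = 1)
    (hg_pos : ∀ j, 0 < g j) (hg_sum : ∑ j, g j = 1) :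
    (- ∑ o, (∑ j, M j o * p j) * Real.log (∑ j, M j o * g j)) ≥
      (- ∑ o, (∑ j, M j o * p j) * Real.log (∑ j, M j o * p j)) ∧
    ((- ∑ o, (∑ j, M j o * p j) * Real.log (∑ j, M j o * g j)) =
      (- ∑ o, (∑ j, M j o * p j) * Real.log (∑ j, M j o * p j)) ↔ g = p) := by
  have hnn : ∀ q : Fin c → ℝ, (∀ j, 0 < q j) → ∀ o, 0 ≤ ∑ j, M j o * q j := fun q hq o =>
    Finset.sum_nonneg fun j _ => mul_nonneg (hM_nonneg j o) (hq j).le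
  have hsum : ∀ q : Fin c → ℝ, ∑ o, ∑ j, M j o * q j = ∑ j, q j := fun q => by
    rw [Finset.sum_comm]
    simp [← Finset.sum_mul, hM_row]
  have hzero : ∀ o, ∑ j, M j o * g j = 0 → ∑ j, M j o * p j = 0 := fun o h => by
    rw [Finset.sum_eq_zero_iff_of_nonneg
      fun j _ => mul_nonneg (hM_nonneg j o) (hg_pos j).le] at h
    refine Finset.sum_eq_zero fun j hj => ?_
    rw [(mul_eq_zero.1 (h j hj)).resolve_right (hg_pos j).ne', zero_mul]
  have ha := hnn p hp_pos
  have hb := hnn g hg_pos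
  have hab : ∑ o, ∑ j, M j o * g j - ∑ o, ∑ j, M j o * p j = 0 := by
    rw [hsum, hsum, hp_sum, hg_sum, sub_self]
  have hinj : (∀ o, ∑ j, M j o * p j = ∑ j, M j o * g j) → g = p := fun h =>
    vecMul_injective_of_rank M hM_rank <| funext fun o => by
      simpa [Matrix.vecMul, dotProduct, mul_comm] using (h o).symm
  have hle : ∀ o ∈ Finset.univ, _ := fun o (_ : o ∈ Finset.univ) =>
    mul_log_sub_le (ha o) (hb o) (hzero o)
  refine ⟨?_, fun h => hinj fun o => ?_, fun h => by rw [h]⟩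
  · have h := Finset.sum_le_sum hle
    rw [Finset.sum_sub_distrib, Finset.sum_sub_distrib] at h
    linarith
  · refine eq_of_mul_log_sub_eq (ha o) (hb o) (hzero o) ?_
    refine (Finset.sum_eq_sum_iff_of_le hle).1 ?_ o (Finset.mem_univ o)
    rw [Finset.sum_sub_distrib, Finset.sum_sub_distrib]
    linarith
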